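/- arXiv:1004.5192 — 4 statements merged into one kernel-verified Lean document; each statement's English description precedes it below -/
import Mathlib

section
/- Let 𝒳 be a convex test class and U an 𝒳-consistent stochastic utility such that the partial derivative U_x(t,x) = ∂U/∂x exists and is continuous. Fix s ≥ 0 and s-attainable wealths η, η' > 0, let X*(s,η) ∈ 𝒳(s,η) be the optimal wealth process for U started from η at time s, and let X(s,η') ∈ 𝒳(s,η') be any test portfolio (with the processes below integrable). Then the process ((X_t(s,η') − X*_t(s,η)) · U_x(t, X*_t(s,η)))_{t ≥ s} is a supermartingale. -/
open MeasureTheory Set Filter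

variable {Ω : Type*}

/-- A process `f` is adapted, integrable and a martingale on the time interval `[s, ∞)`. -/
def IsMartingaleOn {m0 : MeasurableSpace Ω} (𝓕 : Filtration ℝ m0) (μ : Measure Ω)
    (f : ℝ → Ω → ℝ) (s : ℝ) : Prop :=
  (∀ t, s ≤ t → StronglyMeasurable[𝓕 t] (f t)) ∧
  (∀ t, s ≤ t → Integrable (f t) μ) ∧
  ∀ t₁ t₂, s ≤ t₁ → t₁ ≤ t₂ → μ[f t₂|𝓕 t₁] =ᵐ[μ] f t₁

/-- A process `f` is adapted, integrable and a supermartingale on the time interval `[s, ∞)`. -/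
def IsSupermartingaleOn {m0 : MeasurableSpace Ω} (𝓕 : Filtration ℝ m0) (μ : Measure Ω)
    (f : ℝ → Ω → ℝ) (s : ℝ) : Prop :=
  (∀ t, s ≤ t → StronglyMeasurable[𝓕 t] (f t)) ∧
  (∀ t, s ≤ t → Integrable (f t) μ) ∧
  ∀ t₁ t₂, s ≤ t₁ → t₁ ≤ t₂ → μ[f t₂|𝓕 t₁] ≤ᵐ[μ] f t₁

/-- A process `f` is adapted, integrable and a submartingale on the time interval `[s, ∞)`. -/
def IsSubmartingaleOn {m0 : MeasurableSpace Ω} (𝓕 : Filtration ℝ m0) (μ : Measure Ω)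
    (f : ℝ → Ω → ℝ) (s : ℝ) : Prop :=
  (∀ t, s ≤ t → StronglyMeasurable[𝓕 t] (f t)) ∧
  (∀ t, s ≤ t → Integrable (f t) μ) ∧
  ∀ t₁ t₂, s ≤ t₁ → t₁ ≤ t₂ → f t₁ ≤ᵐ[μ] μ[f t₂|𝓕 t₁]

/-- Test portfolios from the class `𝒳` starting from `η` at time `s`. -/
def classAt (𝒳 : Set (ℝ → Ω → ℝ)) (s : ℝ) (η : Ω → ℝ) : Set (ℝ → Ω → ℝ) :=
  {X | X ∈ 𝒳 ∧ X s = η}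

/-- `η` is `s`-attainable if some test portfolio starts from `η` at time `s`. -/
def Attainable (𝒳 : Set (ℝ → Ω → ℝ)) (s : ℝ) (η : Ω → ℝ) : Prop :=
  (classAt 𝒳 s η).Nonempty

/-- Convexity of the test class: `ε·𝒳(s,η) + (1-ε)·𝒳(s,η') ⊆ 𝒳(s, εη + (1-ε)η')`. -/
def ConvexClass (𝒳 : Set (ℝ → Ω → ℝ)) : Prop :=
  ∀ s : ℝ, ∀ ε : ℝ, ε ∈ Icc (0:ℝ) 1 → ∀ η η' : Ω → ℝ,
    ∀ X ∈ classAt 𝒳 s η, ∀ X' ∈ classAt 𝒳 s η',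
      (fun t ω => ε * X t ω + (1 - ε) * X' t ω)
        ∈ classAt 𝒳 s (fun ω => ε * η ω + (1 - ε) * η' ω)

/-- Homogeneity of the test class: `λ·𝒳 ⊆ 𝒳` for every `λ > 0`. -/
def HomogeneousClass (𝒳 : Set (ℝ → Ω → ℝ)) : Prop :=
  ∀ lam : ℝ, 0 < lam → ∀ X ∈ 𝒳, (fun t ω => lam * X t ω) ∈ 𝒳

/-- `U` is an `𝒳`-consistent stochastic utility. -/
def IsConsistentUtility {m0 : MeasurableSpace Ω} (𝓕 : Filtration ℝ m0) (μ : Measure Ω)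
    (𝒳 : Set (ℝ → Ω → ℝ)) (U : ℝ → ℝ → Ω → ℝ) : Prop :=
  (∀ t x, StronglyMeasurable[𝓕 t] (U t x)) ∧
  (∀ t : ℝ, ∀ᵐ ω ∂μ, (∀ x, 0 < x → 0 < U t x ω) ∧
      StrictMonoOn (fun x => U t x ω) (Ioi 0) ∧
      StrictConcaveOn ℝ (Ioi 0) (fun x => U t x ω)) ∧
  (∀ s : ℝ, 0 ≤ s → ∀ η : Ω → ℝ, ∀ X ∈ classAt 𝒳 s η,
      IsSupermartingaleOn 𝓕 μ (fun t ω => U t (X t ω) ω) s) ∧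
  (∀ s : ℝ, 0 ≤ s → ∀ η : Ω → ℝ, Attainable 𝒳 s η →
      ∃ Xs ∈ classAt 𝒳 s η, IsMartingaleOn 𝓕 μ (fun t ω => U t (Xs t ω) ω) s)

lemma aux_tendsto (g : ℝ → ℝ) (x y d : ℝ) (hg : HasDerivAt g d x) :
    Tendsto (fun n : ℕ => ((n : ℝ) + 1) *
      (g (1 / ((n : ℝ) + 1) * y + (1 - 1 / ((n : ℝ) + 1)) * x) - g x)) atTop
      (nhds ((y - x) * d)) := by
  have h1 : HasDerivAt (fun e : ℝ => e * y + (1 - e) * x) (y - x) 0 := by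
    have := ((hasDerivAt_id (0 : ℝ)).mul_const (y - x)).add_const x
    have e1 : (fun e : ℝ => e * y + (1 - e) * x) = fun e : ℝ => id e * (y - x) + x := by
      funext e
      simp only [id]
      ring
    rw [e1]
    rwa [one_mul] at this
  have h2 : HasDerivAt (fun e : ℝ => g (e * y + (1 - e) * x)) (d * (y - x)) 0 := by
    have hg' : HasDerivAt g d ((fun e : ℝ => e * y + (1 - e) * x) 0) := by simpa using hg
    exact hg'.comp (0 : ℝ) h1
  have h3 := h2.tendsto_slope_zero_right
  have h4 : Tendsto (fun n : ℕ => 1 / ((n : ℝ) + 1)) atTop (nhdsWithin 0 (Ioi 0)) := by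
    refine tendsto_nhdsWithin_iff.2 ⟨tendsto_one_div_add_atTop_nhds_zero_nat, ?_⟩
    filter_upwards with n
    have : (0 : ℝ) < 1 / ((n : ℝ) + 1) := by positivity
    exact this
  have h5 := h3.comp h4
  rw [mul_comm (y - x) d]
  refine h5.congr fun n => ?_
  simp

lemma aux_lower (g : ℝ → ℝ) (hg : ConcaveOn ℝ (Ioi 0) g) (x y : ℝ) (hx : 0 < x) (hy : 0 < y)
    (n : ℕ) : g y - g x ≤ ((n : ℝ) + 1) *
      (g (1 / ((n : ℝ) + 1) * y + (1 - 1 / ((n : ℝ) + 1)) * x) - g x) := by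
  have hn : (0 : ℝ) < (n : ℝ) + 1 := by positivity
  have h1 : 1 / ((n : ℝ) + 1) ≤ 1 := by
    rw [div_le_one hn]; linarith [Nat.cast_nonneg (α := ℝ) n]
  have ha : 0 ≤ 1 / ((n : ℝ) + 1) := by positivity
  have hb : 0 ≤ 1 - 1 / ((n : ℝ) + 1) := by linarith
  have h := hg.2 (mem_Ioi.2 hy) (mem_Ioi.2 hx) ha hb (by ring)
  simp only [smul_eq_mul] at h
  have h2 := mul_le_mul_of_nonneg_left h hn.le
  have h3 : ((n : ℝ) + 1) * (1 / ((n : ℝ) + 1)) = 1 := by field_simp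
  have h4 : ((n : ℝ) + 1) * (1 / ((n : ℝ) + 1) * g y + (1 - 1 / ((n : ℝ) + 1)) * g x)
      = g y - g x + ((n : ℝ) + 1) * g x := by
    linear_combination (g y - g x) * h3
  linarith

lemma aux_upper (g : ℝ → ℝ) (hg : ConcaveOn ℝ (Ioi 0) g) (x y d : ℝ) (hx : 0 < x) (hy : 0 < y)
    (hd : HasDerivAt g d x) (n : ℕ) : ((n : ℝ) + 1) *
      (g (1 / ((n : ℝ) + 1) * y + (1 - 1 / ((n : ℝ) + 1)) * x) - g x) ≤ (y - x) * d := by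
  have key : ∀ z, 0 < z → g z - g x ≤ (z - x) * d := fun z hz =>
    ge_of_tendsto' (aux_tendsto g x z d hd) (fun n => aux_lower g hg x z hx hz n)
  have hn : (0 : ℝ) < (n : ℝ) + 1 := by positivity
  have h1 : 1 / ((n : ℝ) + 1) ≤ 1 := by
    rw [div_le_one hn]; linarith [Nat.cast_nonneg (α := ℝ) n]
  have hp : 0 < 1 / ((n : ℝ) + 1) * y + (1 - 1 / ((n : ℝ) + 1)) * x := by
    have : 0 < 1 / ((n : ℝ) + 1) * y := by positivity
    have : 0 ≤ (1 - 1 / ((n : ℝ) + 1)) * x := mul_nonneg (by linarith) hx.le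
    linarith
  have h2 := mul_le_mul_of_nonneg_left (key _ hp) hn.le
  have h3 : ((n : ℝ) + 1) * (1 / ((n : ℝ) + 1)) = 1 := by field_simp
  refine h2.trans (le_of_eq ?_)
  linear_combination ((y - x) * d) * h3

/-- for a convex test class `𝒳` and an `𝒳`-consistent utility `U` with continuous
partial derivative `Ux`, for `s`-attainable `η, η' > 0`, an optimal portfolio `X*(s,η)` and any
test portfolio `X(s,η')`, the process `((X_t(s,η') - X*_t(s,η)) · Ux(t, X*_t(s,η)))_{t ≥ s}`
is a supermartingale. -/
theorem statement0 {m0 : MeasurableSpace Ω} (𝓕 : Filtration ℝ m0) (μ : Measure Ω)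
    (h0 : ∀ A : Set Ω, MeasurableSet[𝓕 0] A → μ A = 0 ∨ μ Aᶜ = 0)
    (𝒳 : Set (ℝ → Ω → ℝ))
    (h𝒳 : ∀ X ∈ 𝒳, (∀ t ω, 0 < X t ω) ∧ ∀ t, StronglyMeasurable[𝓕 t] (X t))
    (h𝒳conv : ConvexClass 𝒳)
    (U Ux : ℝ → ℝ → Ω → ℝ)
    (hU : IsConsistentUtility 𝓕 μ 𝒳 U)
    (hUx : ∀ t x ω, 0 < x → HasDerivAt (fun y => U t y ω) (Ux t x ω) x)
    (hUxcont : ∀ t ω, ContinuousOn (fun x => Ux t x ω) (Ioi 0))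
    (s : ℝ) (hs : 0 ≤ s)
    (η η' : Ω → ℝ) (hη : ∀ ω, 0 < η ω) (hη' : ∀ ω, 0 < η' ω)
    (hηmeas : StronglyMeasurable[𝓕 s] η) (hη'meas : StronglyMeasurable[𝓕 s] η')
    -- `X*(s,η)` is the optimal wealth process of `U` started from `η` at time `s`
    (Xstar : ℝ → Ω → ℝ) (hXstar : Xstar ∈ classAt 𝒳 s η)
    (hXstaropt : IsMartingaleOn 𝓕 μ (fun t ω => U t (Xstar t ω) ω) s)
    -- `X(s,η')` is any test portfolio started from `η'` at time `s`
    (X : ℝ → Ω → ℝ) (hX : X ∈ classAt 𝒳 s η')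
    -- the processes below are integrable
    (hInt : ∀ t, s ≤ t →
      Integrable (fun ω => (X t ω - Xstar t ω) * Ux t (Xstar t ω) ω) μ) :
    IsSupermartingaleOn 𝓕 μ
      (fun t ω => (X t ω - Xstar t ω) * Ux t (Xstar t ω) ω) s := by
  obtain ⟨hXs, -⟩ := hXstar
  obtain ⟨hXm, -⟩ := hX
  obtain ⟨-, hUconc, hUsup, -⟩ := hU
  have hpos := (h𝒳 _ hXm).1
  have hspos := (h𝒳 _ hXs).1
  set D : ℕ → ℝ → Ω → ℝ := fun n t ω => ((n : ℝ) + 1) *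
      (U t (1 / ((n : ℝ) + 1) * X t ω + (1 - 1 / ((n : ℝ) + 1)) * Xstar t ω) ω
        - U t (Xstar t ω) ω) with hD
  set F : ℝ → Ω → ℝ := fun t ω => (X t ω - Xstar t ω) * Ux t (Xstar t ω) ω with hF
  have hsup : ∀ n : ℕ, IsSupermartingaleOn 𝓕 μ (fun t ω =>
      U t (1 / ((n : ℝ) + 1) * X t ω + (1 - 1 / ((n : ℝ) + 1)) * Xstar t ω) ω) s := by
    intro n
    have hn : (0 : ℝ) < (n : ℝ) + 1 := by positivity
    have h1 : 1 / ((n : ℝ) + 1) ≤ 1 := by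
      rw [div_le_one hn]; linarith [Nat.cast_nonneg (α := ℝ) n]
    exact hUsup s hs _ _ (h𝒳conv s (1 / ((n : ℝ) + 1)) ⟨by positivity, h1⟩ _ _ X ⟨hXm, rfl⟩
      Xstar ⟨hXs, rfl⟩)
  obtain ⟨hSm, hSi, hSe⟩ := hXstaropt
  have hDlim : ∀ t ω, Tendsto (fun n => D n t ω) atTop (nhds (F t ω)) := fun t ω =>
    aux_tendsto (fun y => U t y ω) _ _ _ (hUx t _ ω (hspos t ω))
  have hDm : ∀ n t, s ≤ t → StronglyMeasurable[𝓕 t] (D n t) := fun n t ht =>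
    (((hsup n).1 t ht).sub (hSm t ht)).const_mul _
  have hDi : ∀ n t, s ≤ t → Integrable (D n t) μ := fun n t ht =>
    (((hsup n).2.1 t ht).sub (hSi t ht)).const_mul _
  have hFm : ∀ t, s ≤ t → StronglyMeasurable[𝓕 t] (F t) := fun t ht =>
    stronglyMeasurable_of_tendsto atTop (fun n => hDm n t ht)
      (tendsto_pi_nhds.2 fun ω => hDlim t ω)
  have hbd : ∀ n t, ∀ᵐ ω ∂μ, ‖D n t ω‖ ≤ |D 0 t ω| + |F t ω| := by
    intro n t
    filter_upwards [hUconc t] with ω hω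
    have hc := hω.2.2.concaveOn
    have hl := aux_lower _ hc _ _ (hspos t ω) (hpos t ω) n
    have hu := aux_upper _ hc _ _ _ (hspos t ω) (hpos t ω) (hUx t _ ω (hspos t ω)) n
    have h0 : D 0 t ω = U t (X t ω) ω - U t (Xstar t ω) ω := by simp [hD]
    have hl' : D 0 t ω ≤ D n t ω := by rw [h0]; exact hl
    have hu' : D n t ω ≤ F t ω := hu
    rw [Real.norm_eq_abs, abs_le]
    constructor
    · linarith [neg_abs_le (D 0 t ω), abs_nonneg (F t ω)]
    · linarith [le_abs_self (F t ω), abs_nonneg (D 0 t ω)]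
  refine ⟨hFm, hInt, fun t₁ t₂ h1 h12 => ?_⟩
  have h2 : s ≤ t₂ := h1.trans h12
  have hm := 𝓕.le t₁
  by_cases hσ : SigmaFinite (μ.trim hm)
  swap
  · have hz := hSe t₁ t₂ h1 h12
    rw [condExp_of_not_sigmaFinite hm hσ] at hz
    filter_upwards [hz, hUconc t₁] with ω a b
    have := b.1 _ (hspos t₁ ω)
    simp only [Pi.zero_apply] at a
    linarith
  have hDle : ∀ n (A : Set Ω), MeasurableSet[𝓕 t₁] A →
      ∫ ω in A, D n t₂ ω ∂μ ≤ ∫ ω in A, D n t₁ ω ∂μ := by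
    intro n A hA
    rw [← setIntegral_condExp hm (hDi n t₂ h2) hA]
    refine setIntegral_mono_ae integrable_condExp.integrableOn (hDi n t₁ h1).integrableOn ?_
    have e1 : μ[D n t₂|𝓕 t₁] =ᵐ[μ] ((n : ℝ) + 1) • μ[_|𝓕 t₁] :=
      condExp_smul ((n : ℝ) + 1) _ (𝓕 t₁)
    have e2 := condExp_sub ((hsup n).2.1 t₂ h2) (hSi t₂ h2) (𝓕 t₁)
    filter_upwards [e1, e2, hSe t₁ t₂ h1 h12, (hsup n).2.2 t₁ t₂ h1 h12] with ω a b c d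
    rw [a]
    have hn : (0 : ℝ) ≤ (n : ℝ) + 1 := by positivity
    refine mul_le_mul_of_nonneg_left ?_ hn
    refine (le_of_eq b).trans ?_
    rw [Pi.sub_apply, c]
    exact sub_le_sub_right d _
  have hlimI : ∀ t, s ≤ t → ∀ A : Set Ω,
      Tendsto (fun n => ∫ ω in A, D n t ω ∂μ) atTop (nhds (∫ ω in A, F t ω ∂μ)) := by
    intro t ht A
    refine tendsto_integral_of_dominated_convergence (fun ω => |D 0 t ω| + |F t ω|)
      (fun n => (hDi n t ht).integrableOn.aestronglyMeasurable)
      (((hDi 0 t ht).abs.add (hInt t ht).abs).integrableOn)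
      (fun n => ae_restrict_of_ae (hbd n t)) (Eventually.of_forall fun ω => hDlim t ω)
  have hFle : ∀ A : Set Ω, MeasurableSet[𝓕 t₁] A →
      ∫ ω in A, F t₂ ω ∂μ ≤ ∫ ω in A, F t₁ ω ∂μ := fun A hA =>
    le_of_tendsto_of_tendsto' (hlimI t₂ h2 A) (hlimI t₁ h1 A) (fun n => hDle n A hA)
  refine ae_le_of_ae_le_trim (hm := hm) ?_
  refine ae_le_of_forall_setIntegral_le
    (integrable_condExp.trim hm stronglyMeasurable_condExp)
    ((hInt t₁ h1).trim hm (hFm t₁ h1)) ?_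
  intro A hA _
  rw [← setIntegral_trim hm stronglyMeasurable_condExp hA,
    ← setIntegral_trim hm (hFm t₁ h1) hA, setIntegral_condExp hm (hInt t₂ h2) hA]
  exact hFle A hA
end

section
/- Let 𝒳 be a convex test class that is moreover homogeneous (λ·𝒳 ⊆ 𝒳 for every λ > 0), and let U be an 𝒳-consistent stochastic utility such that U_x = ∂U/∂x exists and is continuous. Then for every s ≥ 0 and every s-attainable wealth η > 0, the process (X*_t(s,η) · U_x(t, X*_t(s,η)))_{t ≥ s} is a martingale, where X*(s,η) is the optimal wealth process of U started from η at time s. -/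
open MeasureTheory Set Filter

variable {Ω : Type*}

theorem slope_bound_aux (G : ℝ → ℝ) (hc : ConcaveOn ℝ (Ioi 0) G) (hm : MonotoneOn G (Ioi 0))
    (l : ℝ) (hl : 1 / 2 ≤ l) (hl1 : l ≠ 1) :
    |(G l - G 1) / (l - 1)| ≤ 2 * (G 1 - G (1 / 2)) := by
  have h1 : (1:ℝ) ∈ Ioi (0:ℝ) := by norm_num
  have hh : (1/2:ℝ) ∈ Ioi (0:ℝ) := by norm_num
  have hl0 : l ∈ Ioi (0:ℝ) := by simp only [mem_Ioi]; linarith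
  rcases lt_or_gt_of_ne hl1 with h | h
  · have hm1 := hm hl0 h1 h.le
    have hpos : 0 < 1 - l := by linarith
    have e : (G l - G 1) / (l - 1) = (G 1 - G l) / (1 - l) := by
      rw [← neg_sub (G 1), ← neg_sub 1 l, neg_div_neg_eq]
    rw [e, abs_of_nonneg (div_nonneg (by linarith) hpos.le), div_le_iff₀ hpos]
    rcases eq_or_lt_of_le hl with h2 | h2
    · rw [← h2]; linarith
    · have := hc.slope_anti_adjacent hh h1 h2 h
      rw [div_le_div_iff₀ hpos (by linarith)] at this
      nlinarith
  · have hm1 := hm h1 hl0 h.le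
    have hpos : 0 < l - 1 := by linarith
    rw [abs_of_nonneg (div_nonneg (by linarith) hpos.le)]
    have := hc.slope_anti_adjacent hh hl0 (by norm_num) h
    refine this.trans (le_of_eq ?_)
    ring

theorem seq_aux (c : ℝ) (hc : c = 1 ∨ c = -1) :
    (∀ n : ℕ, 1 / 2 ≤ 1 + c / ((n:ℝ) + 2)) ∧ (∀ n : ℕ, 1 + c / ((n:ℝ) + 2) ≠ 1) ∧
    Tendsto (fun n : ℕ => 1 + c / ((n:ℝ) + 2)) atTop (nhdsWithin 1 {1}ᶜ) := by
  have hn : ∀ n : ℕ, (0:ℝ) < (n:ℝ) + 2 := fun n => by positivity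
  have hne : ∀ n : ℕ, 1 + c / ((n:ℝ) + 2) ≠ 1 := by
    intro n h
    have h2 : c / ((n:ℝ) + 2) = 0 := by linarith
    rcases div_eq_zero_iff.1 h2 with h | h
    · rcases hc with rfl | rfl <;> norm_num at h
    · exact (hn n).ne' h
  refine ⟨fun n => ?_, hne, ?_⟩
  · have h2 : -(1/2) ≤ c / ((n:ℝ) + 2) := by
      rw [le_div_iff₀ (hn n)]
      have : (0:ℝ) ≤ n := n.cast_nonneg
      rcases hc with rfl | rfl <;> linarith
    linarith
  · refine tendsto_nhdsWithin_iff.2 ⟨?_, Eventually.of_forall hne⟩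
    have : Tendsto (fun n : ℕ => c / ((n:ℝ) + 2)) atTop (nhds 0) :=
      tendsto_const_nhds.div_atTop (tendsto_atTop_add_const_right _ _ tendsto_natCast_atTop_atTop)
    simpa using this.const_add 1

/-- for a convex and homogeneous test class `𝒳` and an `𝒳`-consistent utility `U`
with continuous partial derivative `Ux`, for every `s ≥ 0` and `s`-attainable `η > 0`, the process
`(X*_t(s,η) · Ux(t, X*_t(s,η)))_{t ≥ s}` is a martingale, where `X*(s,η)` is the optimal wealth
process of `U` started from `η` at time `s`. -/
theorem statement1 {m0 : MeasurableSpace Ω} (𝓕 : Filtration ℝ m0) (μ : Measure Ω)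
    (h0 : ∀ A : Set Ω, MeasurableSet[𝓕 0] A → μ A = 0 ∨ μ Aᶜ = 0)
    (𝒳 : Set (ℝ → Ω → ℝ))
    (h𝒳 : ∀ X ∈ 𝒳, (∀ t ω, 0 < X t ω) ∧ ∀ t, StronglyMeasurable[𝓕 t] (X t))
    (h𝒳conv : ConvexClass 𝒳) (h𝒳hom : HomogeneousClass 𝒳)
    (U Ux : ℝ → ℝ → Ω → ℝ)
    (hU : IsConsistentUtility 𝓕 μ 𝒳 U)
    (hUx : ∀ t x ω, 0 < x → HasDerivAt (fun y => U t y ω) (Ux t x ω) x)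
    (hUxcont : ∀ t ω, ContinuousOn (fun x => Ux t x ω) (Ioi 0))
    (s : ℝ) (hs : 0 ≤ s)
    (η : Ω → ℝ) (hη : ∀ ω, 0 < η ω) (hηmeas : StronglyMeasurable[𝓕 s] η)
    -- `X*(s,η)` is the optimal wealth process of `U` started from `η` at time `s`
    (Xstar : ℝ → Ω → ℝ) (hXstar : Xstar ∈ classAt 𝒳 s η)
    (hXstaropt : IsMartingaleOn 𝓕 μ (fun t ω => U t (Xstar t ω) ω) s) :
    IsMartingaleOn 𝓕 μ (fun t ω => Xstar t ω * Ux t (Xstar t ω) ω) s := by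
  obtain ⟨hUm, hUpos, hUsup, -⟩ := hU
  have hX𝒳 := hXstar.1
  have hXpos := (h𝒳 _ hX𝒳).1
  -- scaled wealth
  have hsup : ∀ l : ℝ, 0 < l →
      IsSupermartingaleOn 𝓕 μ (fun t ω => U t (l * Xstar t ω) ω) s := fun l hl =>
    hUsup s hs _ (fun t ω => l * Xstar t ω) ⟨h𝒳hom l hl _ hX𝒳, rfl⟩
  have hopt : IsMartingaleOn 𝓕 μ (fun t ω => U t (1 * Xstar t ω) ω) s := by
    simpa only [one_mul] using hXstaropt
  -- convergence of the slopes
  have hlim : ∀ t ω, Tendsto (fun l => (U t (l * Xstar t ω) ω - U t (1 * Xstar t ω) ω) / (l - 1))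
      (nhdsWithin 1 {1}ᶜ) (nhds (Xstar t ω * Ux t (Xstar t ω) ω)) := by
    intro t ω
    have h1 : HasDerivAt (fun y => U t y ω) (Ux t (Xstar t ω) ω) (1 * Xstar t ω) := by
      rw [one_mul]; exact hUx t _ ω (hXpos t ω)
    have h2 : HasDerivAt (fun l : ℝ => l * Xstar t ω) (Xstar t ω) 1 := by
      simpa using (hasDerivAt_id (1:ℝ)).mul_const (Xstar t ω)
    have h3 := (h1.comp (1:ℝ) h2).tendsto_slope
    rw [mul_comm (Ux t (Xstar t ω) ω)] at h3
    refine h3.congr fun l => ?_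
    rw [slope_def_field]
    rfl
  have hbound : ∀ t, ∀ᵐ ω ∂μ, ∀ l : ℝ, 1 / 2 ≤ l → l ≠ 1 →
      |(U t (l * Xstar t ω) ω - U t (1 * Xstar t ω) ω) / (l - 1)| ≤
        2 * (U t (1 * Xstar t ω) ω - U t (1 / 2 * Xstar t ω) ω) := by
    intro t
    filter_upwards [hUpos t] with ω hω l hl hl1
    obtain ⟨-, hmono, hconc⟩ := hω
    have hx := hXpos t ω
    refine slope_bound_aux (fun l => U t (l * Xstar t ω) ω) ⟨convex_Ioi 0, ?_⟩ ?_ l hl hl1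
    · intro x hx' y hy a b ha hb hab
      have := hconc.concaveOn.2 (mul_pos hx' hx) (mul_pos hy hx) ha hb hab
      simp only [smul_eq_mul] at this ⊢
      convert this using 2
      ring
    · intro x hx' y hy hxy
      exact hmono.monotoneOn (mul_pos hx' hx) (mul_pos hy hx) (by gcongr)
  have hDm : ∀ t, s ≤ t → ∀ l : ℝ, 0 < l → StronglyMeasurable[𝓕 t]
      (fun ω => (U t (l * Xstar t ω) ω - U t (1 * Xstar t ω) ω) / (l - 1)) := by
    intro t ht l hl
    have := ((hsup l hl).1 t ht).sub (hopt.1 t ht)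
    simp only [div_eq_mul_inv]
    exact this.mul_const _
  have hfm : ∀ t, s ≤ t → StronglyMeasurable[𝓕 t] (fun ω => Xstar t ω * Ux t (Xstar t ω) ω) := by
    intro t ht
    obtain ⟨hq1, hq2, hq3⟩ := seq_aux 1 (Or.inl rfl)
    refine stronglyMeasurable_of_tendsto (m := 𝓕 t) atTop
      (fun n => hDm t ht _ (lt_of_lt_of_le (by norm_num) (hq1 n))) ?_
    exact tendsto_pi_nhds.2 fun ω => (hlim t ω).comp hq3
  have hBint : ∀ t, s ≤ t → Integrable
      (fun ω => 2 * (U t (1 * Xstar t ω) ω - U t (1 / 2 * Xstar t ω) ω)) μ := by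
    intro t ht
    exact ((hopt.2.1 t ht).sub ((hsup (1/2) (by norm_num)).2.1 t ht)).const_mul 2
  have hfint : ∀ t, s ≤ t → Integrable (fun ω => Xstar t ω * Ux t (Xstar t ω) ω) μ := by
    intro t ht
    obtain ⟨hq1, hq2, hq3⟩ := seq_aux 1 (Or.inl rfl)
    refine (hBint t ht).mono' ((hfm t ht).mono (𝓕.le t)).aestronglyMeasurable ?_
    filter_upwards [hbound t] with ω hω
    exact le_of_tendsto ((hlim t ω).comp hq3).norm
      (Eventually.of_forall fun n => hω _ (hq1 n) (hq2 n))
  have hInt : ∀ t, s ≤ t → ∀ A : Set Ω, ∀ c : ℝ, (c = 1 ∨ c = -1) →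
      Tendsto (fun n : ℕ =>
        ((∫ ω in A, U t ((1 + c / ((n:ℝ) + 2)) * Xstar t ω) ω ∂μ)
          - ∫ ω in A, U t (1 * Xstar t ω) ω ∂μ) / (1 + c / ((n:ℝ) + 2) - 1)) atTop
        (nhds (∫ ω in A, Xstar t ω * Ux t (Xstar t ω) ω ∂μ)) := by
    intro t ht A c hc
    obtain ⟨hq1, hq2, hq3⟩ := seq_aux c hc
    have hp : ∀ n : ℕ, 0 < 1 + c / ((n:ℝ) + 2) := fun n => lt_of_lt_of_le (by norm_num) (hq1 n)
    have key := tendsto_integral_of_dominated_convergence (μ := μ.restrict A)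
      (F := fun (n : ℕ) ω => (U t ((1 + c / ((n:ℝ) + 2)) * Xstar t ω) ω
        - U t (1 * Xstar t ω) ω) / (1 + c / ((n:ℝ) + 2) - 1))
      (f := fun ω => Xstar t ω * Ux t (Xstar t ω) ω)
      (fun ω => 2 * (U t (1 * Xstar t ω) ω - U t (1 / 2 * Xstar t ω) ω))
      (fun n => ((hDm t ht _ (hp n)).mono (𝓕.le t)).aestronglyMeasurable)
      (hBint t ht).integrableOn
      (fun n => ae_restrict_of_ae ((hbound t).mono fun ω hω => hω _ (hq1 n) (hq2 n)))
      (Eventually.of_forall fun ω => (hlim t ω).comp hq3)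
    refine key.congr fun n => ?_
    rw [integral_div, integral_sub]
    · exact ((hsup _ (hp n)).2.1 t ht).integrableOn
    · exact (hopt.2.1 t ht).integrableOn
  refine ⟨hfm, hfint, fun t₁ t₂ h1 h12 => ?_⟩
  have h2 := h1.trans h12
  by_cases hσ : SigmaFinite (μ.trim (𝓕.le t₁))
  swap
  · have hmt := hopt.2.2 t₁ t₂ h1 h12
    rw [condExp_of_not_sigmaFinite (𝓕.le t₁) hσ] at hmt
    filter_upwards [hmt, hUpos t₁] with ω ha hb
    have := hb.1 (1 * Xstar t₁ ω) (by rw [one_mul]; exact hXpos _ _)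
    exact absurd ha this.ne
  have hS : ∀ l : ℝ, 0 < l → ∀ A, MeasurableSet[𝓕 t₁] A →
      ∫ ω in A, U t₂ (l * Xstar t₂ ω) ω ∂μ ≤ ∫ ω in A, U t₁ (l * Xstar t₁ ω) ω ∂μ := by
    intro l hl A hA
    rw [← setIntegral_condExp (𝓕.le t₁) ((hsup l hl).2.1 t₂ h2) hA]
    exact setIntegral_mono_ae integrable_condExp.integrableOn
      ((hsup l hl).2.1 t₁ h1).integrableOn ((hsup l hl).2.2 t₁ t₂ h1 h12)
  have hS1 : ∀ A, MeasurableSet[𝓕 t₁] A →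
      ∫ ω in A, U t₂ (1 * Xstar t₂ ω) ω ∂μ = ∫ ω in A, U t₁ (1 * Xstar t₁ ω) ω ∂μ := by
    intro A hA
    rw [← setIntegral_condExp (𝓕.le t₁) (hopt.2.1 t₂ h2) hA]
    exact integral_congr_ae (ae_restrict_of_ae (hopt.2.2 t₁ t₂ h1 h12))
  refine (ae_eq_condExp_of_forall_setIntegral_eq (𝓕.le t₁) (hfint t₂ h2)
    (fun A _ _ => (hfint t₁ h1).integrableOn) (fun A hA _ => ?_)
    (hfm t₁ h1).aestronglyMeasurable).symm
  apply le_antisymm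
  · have hq := (seq_aux (-1) (Or.inr rfl)).1
    refine le_of_tendsto_of_tendsto' (hInt t₁ h1 A (-1) (Or.inr rfl))
      (hInt t₂ h2 A (-1) (Or.inr rfl)) fun n => ?_
    rw [hS1 A hA]
    refine div_le_div_of_nonpos_of_le ?_
      (sub_le_sub_right (hS _ (lt_of_lt_of_le (by norm_num) (hq n)) A hA) _)
    have : (-1:ℝ) / ((n:ℝ) + 2) ≤ 0 := div_nonpos_of_nonpos_of_nonneg (by norm_num) (by positivity)
    linarith
  · have hq := (seq_aux 1 (Or.inl rfl)).1
    refine le_of_tendsto_of_tendsto' (hInt t₂ h2 A 1 (Or.inl rfl))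
      (hInt t₁ h1 A 1 (Or.inl rfl)) fun n => ?_
    rw [hS1 A hA]
    refine div_le_div_of_nonneg_right
      (sub_le_sub_right (hS _ (lt_of_lt_of_le (by norm_num) (hq n)) A hA) _) ?_
    have : 0 ≤ (1:ℝ) / ((n:ℝ) + 2) := by positivity
    linarith
end

section
/- Let f : (0,∞) → (0,∞) be a continuous strictly increasing bijection of (0,∞) onto itself with inverse g, and let v : (0,∞) → (0,∞) be continuous and decreasing such that z ↦ v(g(z)) is integrable near 0 and v(z)·f(z) → 0 as z → 0+. Then for every a > 0: ∫₀^{f(a)} v(g(z)) dz = ∫_{(0,a]} v(z) df(z) = v(a)·f(a) − ∫_{(0,a]} f(z) dv(z), where df is the Stieltjes measure associated with the increasing function f and dv is the (nonpositive) Stieltjes measure associated with the decreasing function v. -/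
open Set Filter MeasureTheory

/-- for a continuous strictly increasing bijection `f` of `(0,∞)` onto itself with
inverse `g` and a continuous decreasing positive `v` with `v∘g` integrable near `0` and
`v(z)·f(z) → 0` as `z → 0⁺`, one has, for every `a > 0`,
`∫₀^{f(a)} v(g(z)) dz = ∫_{(0,a]} v df = v(a)·f(a) − ∫_{(0,a]} f dv`, where `μf = df` is the
Stieltjes measure of the increasing `f` and `μv = −dv` is the Stieltjes measure of the
decreasing `v` (so that `−∫ f dv = +∫ f dμv`). -/
theorem statement10 (f g v : ℝ → ℝ) (μf μv : Measure ℝ)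
    (hfcont : ContinuousOn f (Ioi 0)) (hfmono : StrictMonoOn f (Ioi 0))
    (hfbij : BijOn f (Ioi 0) (Ioi 0))
    (hgmaps : MapsTo g (Ioi 0) (Ioi 0))
    (hgleft : ∀ x ∈ Ioi (0:ℝ), g (f x) = x)
    (hgright : ∀ z ∈ Ioi (0:ℝ), f (g z) = z)
    (hvcont : ContinuousOn v (Ioi 0)) (hvpos : ∀ x ∈ Ioi (0:ℝ), 0 < v x)
    (hvanti : AntitoneOn v (Ioi 0))
    (hint : ∀ b ∈ Ioi (0:ℝ), IntegrableOn (fun z => v (g z)) (Ioc 0 b))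
    (hlim : Tendsto (fun z => v z * f z) (nhdsWithin 0 (Ioi 0)) (nhds 0))
    -- `μf` is the Stieltjes measure of `f`; `μv` is the Stieltjes measure of `-v`
    (hμf : ∀ a b : ℝ, 0 < a → a ≤ b → μf (Ioc a b) = ENNReal.ofReal (f b - f a))
    (hμv : ∀ a b : ℝ, 0 < a → a ≤ b → μv (Ioc a b) = ENNReal.ofReal (v a - v b)) :
    ∀ a ∈ Ioi (0:ℝ),
      (∫ z in Ioc (0:ℝ) (f a), v (g z)) = (∫ z in Ioc (0:ℝ) a, v z ∂μf) ∧
      (∫ z in Ioc (0:ℝ) a, v z ∂μf) = v a * f a + ∫ z in Ioc (0:ℝ) a, f z ∂μv := by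
  have hgmono : StrictMonoOn g (Ioi 0) := by
    intro x hx y hy hxy
    by_contra h
    have h1 := hfmono.monotoneOn (hgmaps hy) (hgmaps hx) (not_lt.mp h)
    rw [hgright x hx, hgright y hy] at h1
    linarith
  have hfpos : ∀ x ∈ Ioi (0:ℝ), 0 < f x := fun x hx => hfbij.mapsTo hx
  -- `μf` on initial segments
  have hf0 : Tendsto f (nhdsWithin 0 (Ioi 0)) (nhds 0) := by
    rw [tendsto_order]
    constructor
    · intro b hb
      filter_upwards [self_mem_nhdsWithin] with x hx
      exact hb.trans (hfpos x hx)
    · intro b hb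
      have hgb : (0:ℝ) < g b := hgmaps hb
      filter_upwards [Ioo_mem_nhdsGT hgb] with x hx
      have := hfmono hx.1 hgb hx.2
      rwa [hgright b hb] at this
  have hIoc : ∀ c : ℝ, 0 < c → μf (Ioc 0 c) = ENNReal.ofReal (f c) := by
    intro c hc
    have hU : Ioc 0 c = ⋃ n : ℕ, Ioc (c / ((n:ℝ) + 1)) c := by
      ext x
      simp only [mem_Ioc, mem_iUnion]
      constructor
      · rintro ⟨h1, h2⟩
        obtain ⟨n, hn⟩ := exists_nat_gt (c / x)
        refine ⟨n, ?_, h2⟩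
        rw [div_lt_iff₀ h1] at hn
        rw [div_lt_iff₀ (by positivity)]
        nlinarith
      · rintro ⟨n, h1, h2⟩
        exact ⟨lt_of_le_of_lt (by positivity) h1, h2⟩
    have hmon : Monotone (fun n : ℕ => Ioc (c / ((n:ℝ) + 1)) c) := by
      intro m n hmn
      apply Ioc_subset_Ioc_left
      have : (m:ℝ) ≤ n := by exact_mod_cast hmn
      gcongr
    have ht := tendsto_measure_iUnion_atTop (μ := μf) hmon
    rw [← hU] at ht
    have hseq : Tendsto (fun n : ℕ => c / ((n:ℝ) + 1)) atTop (nhdsWithin 0 (Ioi 0)) := by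
      rw [tendsto_nhdsWithin_iff]
      refine ⟨?_, Eventually.of_forall fun n => ?_⟩
      · have := (tendsto_one_div_add_atTop_nhds_zero_nat (𝕜 := ℝ)).const_mul c
        simpa [div_eq_mul_inv] using this
      · simp only [mem_Ioi]; positivity
    have ht2 : Tendsto (fun n : ℕ => ENNReal.ofReal (f c - f (c / ((n:ℝ) + 1)))) atTop
        (nhds (ENNReal.ofReal (f c - 0))) :=
      (ENNReal.continuous_ofReal.tendsto _).comp (tendsto_const_nhds.sub (hf0.comp hseq))
    rw [sub_zero] at ht2
    refine tendsto_nhds_unique ht (ht2.congr fun n => ?_)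
    have hn : 0 < c / ((n:ℝ) + 1) := by positivity
    simp only [Function.comp]
    rw [hμf _ _ hn]
    exact div_le_self hc.le (by linarith [(Nat.cast_nonneg n : (0:ℝ) ≤ n)])
  intro a ha
  have ha0 : (0:ℝ) < a := ha
  have hfa := hfpos a ha
  have hgm : AEMeasurable g (volume.restrict (Ioc 0 (f a))) :=
    aemeasurable_restrict_of_monotoneOn measurableSet_Ioc
      (hgmono.monotoneOn.mono Ioc_subset_Ioi_self)
  have hmap : Measure.map g (volume.restrict (Ioc 0 (f a))) = μf.restrict (Ioc 0 a) := by
    have : IsFiniteMeasure (Measure.map g (volume.restrict (Ioc 0 (f a)))) := inferInstance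
    apply Measure.ext_of_Iic
    intro x
    rw [Measure.map_apply_of_aemeasurable hgm measurableSet_Iic,
      Measure.restrict_apply measurableSet_Iic,
      Measure.restrict_apply' measurableSet_Ioc]
    rcases le_or_gt x 0 with hx | hx
    · have e1 : g ⁻¹' Iic x ∩ Ioc 0 (f a) = ∅ := by
        ext z
        simp only [mem_inter_iff, mem_preimage, mem_Iic, mem_Ioc, mem_empty_iff_false, iff_false]
        rintro ⟨h1, h2, h3⟩
        have : 0 < g z := hgmaps h2
        linarith
      have e2 : Iic x ∩ Ioc 0 a = ∅ := by
        ext z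
        simp only [mem_inter_iff, mem_Iic, mem_Ioc, mem_empty_iff_false, iff_false]
        rintro ⟨h1, h2, h3⟩
        linarith
      rw [e1, e2]; simp
    · have hm : 0 < min a x := lt_min ha0 hx
      have e2 : Iic x ∩ Ioc 0 a = Ioc 0 (min a x) := by
        ext z
        simp only [mem_inter_iff, mem_Iic, mem_Ioc, le_min_iff]
        tauto
      have e1 : g ⁻¹' Iic x ∩ Ioc 0 (f a) = Ioc 0 (f (min a x)) := by
        ext z
        simp only [mem_inter_iff, mem_preimage, mem_Iic, mem_Ioc]
        have key : ∀ y : ℝ, 0 < y → 0 < z → (g z ≤ y ↔ z ≤ f y) := by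
          intro y hy hz
          rw [← hfmono.le_iff_le (hgmaps hz) hy, hgright z hz]
        constructor
        · rintro ⟨h1, h2, h3⟩
          refine ⟨h2, (key _ hm h2).1 (le_min ((key a ha0 h2).2 h3) h1)⟩
        · rintro ⟨h2, h3⟩
          have := (key _ hm h2).2 h3
          rw [le_min_iff] at this
          exact ⟨this.2, h2, (key a ha0 h2).1 this.1⟩
      rw [e1, e2, hIoc _ hm, Real.volume_Ioc, sub_zero]
  have h1 : (∫ z in Ioc (0:ℝ) (f a), v (g z)) = (∫ z in Ioc (0:ℝ) a, v z ∂μf) := by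
    rw [← hmap, integral_map hgm]
    rw [hmap]
    exact (hvcont.mono Ioc_subset_Ioi_self).aestronglyMeasurable measurableSet_Ioc
  refine ⟨h1, ?_⟩
  rw [← h1]
  have hfm : AEStronglyMeasurable f (μv.restrict (Ioc 0 a)) :=
    (hfcont.mono Ioc_subset_Ioi_self).aestronglyMeasurable measurableSet_Ioc
  have hfnn : 0 ≤ᵐ[μv.restrict (Ioc 0 a)] f := by
    filter_upwards [ae_restrict_mem measurableSet_Ioc] with x hx
    exact (hfpos x hx.1).le
  have hdint : IntegrableOn (fun z => v (g z) - v a) (Ioc 0 (f a)) :=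
    (hint _ hfa).sub (integrableOn_const (by simp))
  have h2 : (∫ z in Ioc (0:ℝ) a, f z ∂μv) = ∫ z in Ioc (0:ℝ) (f a), (v (g z) - v a) := by
    rw [integral_eq_lintegral_of_nonneg_ae hfnn hfm,
      integral_eq_lintegral_of_nonneg_ae _ hdint.aestronglyMeasurable]
    · congr 1
      rw [lintegral_eq_lintegral_meas_lt _ hfnn hfm.aemeasurable]
      rw [← lintegral_indicator measurableSet_Ioi, ← lintegral_indicator measurableSet_Ioc]
      congr 1
      ext t
      by_cases ht : 0 < t
      · rw [indicator_of_mem (show t ∈ Ioi 0 from ht), Measure.restrict_apply' measurableSet_Ioc]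
        have hgt : 0 < g t := hgmaps ht
        have e : {z | t < f z} ∩ Ioc 0 a = Ioc (g t) a := by
          ext z
          simp only [mem_inter_iff, mem_ofPred_eq, mem_Ioc]
          have key : 0 < z → (g t < z ↔ t < f z) := by
            intro hz
            rw [← hfmono.lt_iff_lt hgt hz, hgright t ht]
          constructor
          · rintro ⟨h1, h2, h3⟩
            exact ⟨(key h2).2 h1, h3⟩
          · rintro ⟨h1, h2⟩
            have hz : 0 < z := hgt.trans h1
            exact ⟨(key hz).1 h1, hz, h2⟩
        rw [e]
        by_cases hta : t ≤ f a
        · rw [indicator_of_mem (show t ∈ Ioc 0 (f a) from ⟨ht, hta⟩)]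
          apply hμv _ _ hgt
          rwa [← hfmono.le_iff_le hgt ha, hgright t ht]
        · rw [indicator_of_notMem (fun h => hta h.2)]
          have : a ≤ g t := by
            rw [← hfmono.le_iff_le ha hgt, hgright t ht]
            exact (not_le.mp hta).le
          rw [Ioc_eq_empty (not_lt.mpr this), measure_empty]
      · rw [indicator_of_notMem (show t ∉ Ioi 0 from ht),
          indicator_of_notMem (show t ∉ Ioc 0 (f a) from fun h => ht h.1)]
    · filter_upwards [ae_restrict_mem measurableSet_Ioc] with t ht
      have hgt : 0 < g t := hgmaps ht.1
      have : g t ≤ a := by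
        rw [← hfmono.le_iff_le hgt ha, hgright t ht.1]
        exact ht.2
      exact sub_nonneg.mpr (hvanti hgt ha this)
  rw [h2, integral_sub (hint _ hfa) (integrableOn_const (by simp))]
  simp [hfa.le]
  ring
end

section
/- Let u : (0,∞) → ℝ be strictly concave and continuously differentiable with u' a strictly decreasing bijection of (0,∞) onto (0,∞) (Inada conditions), and let X : (0,∞) → (0,∞) be a continuous strictly increasing bijection with inverse 𝒳 such that U(x) := ∫₀ˣ u'(𝒳(z)) dz is finite for all x > 0, and z ↦ X((u')⁻¹(z)) is integrable on (y,∞) for each y > 0. Then the convex conjugate Ũ(y) := sup_{x>0}(U(x) − x·y) satisfies Ũ(y) = ∫_y^∞ X((u')⁻¹(z)) dz for every y > 0; equivalently, since (u')⁻¹(z) = −ũ'(z) where ũ(y) = sup_{x>0}(u(x) − xy), one has Ũ(y) = ∫_y^∞ X(−ũ'(z)) dz. -/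
open Set

/-- Conjugate of the integral of a decreasing function with inverse `g`. -/
theorem aux_conj (f g : ℝ → ℝ) (hf : StrictAntiOn f (Ioi 0))
    (hg : ∀ y ∈ Ioi (0:ℝ), g y ∈ Ioi (0:ℝ)) (hfg : ∀ y ∈ Ioi (0:ℝ), f (g y) = y)
    (hfin : ∀ x ∈ Ioi (0:ℝ), MeasureTheory.IntegrableOn f (Ioc 0 x))
    (y : ℝ) (hy : 0 < y) :
    sSup ((fun x => (∫ z in Ioc (0:ℝ) x, f z) - x * y) '' Ioi 0) = ∫ z in Ioi y, g z := by
  have hx0 : 0 < g y := hg y hy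
  have hi : ∀ x ∈ Ioi (0:ℝ), MeasureTheory.IntegrableOn (fun z => f z - y) (Ioc 0 x) :=
    fun x hx => (hfin x hx).sub (MeasureTheory.integrableOn_const (by simp))
  have e1 : ∀ x ∈ Ioi (0:ℝ), (∫ z in Ioc (0:ℝ) x, f z) - x * y
      = ∫ z in Ioc (0:ℝ) x, (f z - y) := by
    intro x hx
    have hx' : (0:ℝ) ≤ x := le_of_lt hx
    rw [MeasureTheory.integral_sub (hfin x hx) (MeasureTheory.integrableOn_const (by simp))]
    simp [hx']
  have hnn : ∀ z ∈ Ioc 0 (g y), 0 ≤ f z - y := by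
    intro z hz
    have := hf.antitoneOn (show z ∈ Ioi (0:ℝ) from hz.1) (hg y hy) hz.2
    rw [hfg y hy] at this
    linarith
  have hnnae : 0 ≤ᵐ[MeasureTheory.volume.restrict (Ioc 0 (g y))] fun z => f z - y :=
    (MeasureTheory.ae_restrict_iff' measurableSet_Ioc).2 (Filter.Eventually.of_forall hnn)
  have key : ∫ z in Ioc (0:ℝ) (g y), (f z - y) = ∫ z in Ioi y, g z := by
    rw [MeasureTheory.Integrable.integral_eq_integral_meas_lt (hi _ hx0) hnnae]
    have h2 := (MeasureTheory.measurePreserving_add_left MeasureTheory.volume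
      y).setIntegral_preimage_emb (measurableEmbedding_addLeft y) g (Ioi y)
    rw [← h2]
    have h3 : (fun x => y + x) ⁻¹' Ioi y = Ioi 0 := by ext; simp
    rw [h3]
    refine MeasureTheory.setIntegral_congr_fun measurableSet_Ioi ?_
    intro t ht
    have ht : 0 < t := ht
    have hw : y + t ∈ Ioi (0:ℝ) := add_pos hy ht
    have hgw : 0 < g (y + t) := hg _ hw
    have h4 : {a | t < f a - y} ∩ Ioc 0 (g y) = Ioo 0 (g (y + t)) := by
      ext z
      simp only [mem_inter_iff, mem_setOf_eq, mem_Ioc, mem_Ioo]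
      constructor
      · rintro ⟨h, hz, -⟩
        refine ⟨hz, (hf.lt_iff_gt (hg _ hw) hz).1 ?_⟩
        rw [hfg _ hw]; linarith
      · rintro ⟨hz, h⟩
        have h5 := (hf.lt_iff_gt (hg _ hw) hz).2 h
        rw [hfg _ hw] at h5
        refine ⟨by linarith, hz, le_of_lt ((hf.lt_iff_gt (hg y hy) hz).1 ?_)⟩
        rw [hfg y hy]; linarith
    show MeasureTheory.Measure.real _ _ = _
    rw [MeasureTheory.measureReal_restrict_apply' measurableSet_Ioc, h4]
    simp [hgw.le]
  rw [← key]
  apply IsGreatest.csSup_eq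
  refine ⟨⟨g y, hx0, e1 _ hx0⟩, ?_⟩
  rintro _ ⟨x, hx, rfl⟩
  have hx' : (0:ℝ) < x := hx
  simp only [e1 x hx]
  rcases le_total x (g y) with h | h
  · exact MeasureTheory.setIntegral_mono_set (hi _ hx0) hnnae
      (HasSubset.Subset.eventuallyLE (Ioc_subset_Ioc_right h))
  · rw [← Ioc_union_Ioc_eq_Ioc hx0.le h, MeasureTheory.setIntegral_union
      (Ioc_disjoint_Ioc_of_le le_rfl) measurableSet_Ioc (hi _ hx0)
      ((hi x hx).mono_set (Ioc_subset_Ioc_left hx0.le))]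
    have : ∫ z in Ioc (g y) x, (f z - y) ≤ 0 := by
      refine MeasureTheory.setIntegral_nonpos measurableSet_Ioc ?_
      intro z hz
      have := hf.antitoneOn (hg y hy) (show z ∈ Ioi (0:ℝ) from hx0.trans hz.1) hz.1.le
      rw [hfg y hy] at this
      linarith
    linarith

/-- Derivative of the conjugate. -/
theorem aux_deriv (u ux I : ℝ → ℝ)
    (huconc : StrictConcaveOn ℝ (Ioi 0) u)
    (hux : ∀ x ∈ Ioi (0:ℝ), HasDerivAt u (ux x) x)
    (huxanti : StrictAntiOn ux (Ioi 0)) (hmaps : MapsTo ux (Ioi 0) (Ioi 0))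
    (hImaps : MapsTo I (Ioi 0) (Ioi 0))
    (hIleft : ∀ x ∈ Ioi (0:ℝ), I (ux x) = x) (hIright : ∀ y ∈ Ioi (0:ℝ), ux (I y) = y)
    (y : ℝ) (hy : 0 < y) :
    HasDerivAt (fun y' => sSup ((fun x => u x - x * y') '' Ioi 0)) (-(I y)) y := by
  have tan : ∀ c ∈ Ioi (0:ℝ), ∀ x ∈ Ioi (0:ℝ), u x ≤ u c + ux c * (x - c) := by
    intro c hc x hx
    rcases lt_trichotomy x c with h | h | h
    · have h1 := huconc.concaveOn.le_slope_of_hasDerivAt hx hc h (hux c hc)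
      rw [slope_def_field, le_div_iff₀ (by linarith)] at h1
      linarith
    · subst h; simp
    · have h1 := huconc.concaveOn.slope_le_of_hasDerivAt hc hx h (hux c hc)
      rw [slope_def_field, div_le_iff₀ (by linarith)] at h1
      linarith
  have opt : ∀ w ∈ Ioi (0:ℝ), ∀ x ∈ Ioi (0:ℝ), u x - x * w ≤ u (I w) - I w * w := by
    intro w hw x hx
    have := tan (I w) (hImaps hw) x hx
    rw [hIright w hw] at this
    linarith
  have hsup : ∀ w ∈ Ioi (0:ℝ), sSup ((fun x => u x - x * w) '' Ioi 0) = u (I w) - I w * w := by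
    intro w hw
    apply IsGreatest.csSup_eq
    refine ⟨⟨I w, hImaps hw, rfl⟩, ?_⟩
    rintro _ ⟨x, hx, rfl⟩
    exact opt w hw x hx
  have hIcont : ContinuousAt I y := by
    have hm : StrictMonoOn (fun z => -(I z)) (Ioi 0) := by
      intro a ha b hb hab
      have : I b < I a := by
        rw [← huxanti.lt_iff_gt (hImaps ha) (hImaps hb), hIright a ha, hIright b hb]
        exact hab
      simpa using this
    have hc : ContinuousAt (fun z => -(I z)) y := by
      refine hm.continuousAt_of_image_mem_nhds (Ioi_mem_nhds hy) ?_
      refine Filter.mem_of_superset (Iio_mem_nhds (show -(I y) < 0 from ?_)) ?_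
      · have : 0 < I y := hImaps hy
        linarith
      · intro v hv
        have hv : v < 0 := hv
        have hv' : -v ∈ Ioi (0:ℝ) := by simpa using hv
        exact ⟨ux (-v), hmaps hv', by simp [hIleft _ hv']⟩
    have h5 : I = fun z => -(-(I z)) := by funext z; ring
    rw [h5]
    exact hc.neg
  rw [hasDerivAt_iff_isLittleO, Asymptotics.isLittleO_iff]
  intro c hc
  filter_upwards [Ioi_mem_nhds hy, Metric.continuousAt_iff'.1 hIcont c hc] with w hw hd
  rw [hsup w hw, hsup y hy]
  rw [Real.dist_eq] at hd
  have a1 := opt w hw (I y) (hImaps hy)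
  have a2 := opt y hy (I w) (hImaps hw)
  simp only [smul_eq_mul, Real.norm_eq_abs]
  have a3 : |u (I w) - I w * w - (u (I y) - I y * y) - (w - y) * -I y|
      ≤ |(I w - I y) * (w - y)| := by
    rw [abs_of_nonneg (by nlinarith)]
    rw [← abs_neg]
    refine le_trans ?_ (le_abs_self _)
    nlinarith
  rw [abs_mul] at a3
  exact a3.trans (mul_le_mul_of_nonneg_right hd.le (abs_nonneg _))


/-- for a strictly concave `C¹` utility `u` whose derivative `u'` is a strictly
decreasing bijection of `(0,∞)` onto itself (with inverse `I`), and a continuous strictly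
increasing bijection `X` of `(0,∞)` onto itself with inverse `XI`, the convex conjugate of
`U(x) := ∫₀ˣ u'(XI(z)) dz` satisfies `Ũ(y) = ∫_y^∞ X(I(z)) dz = ∫_y^∞ X(−ũ'(z)) dz`, since
`I = (u')⁻¹ = −ũ'` where `ũ` is the conjugate of `u`. -/
theorem statement12 (u ux I X XI : ℝ → ℝ)
    -- `u` strictly concave, continuously differentiable with derivative `ux = u'`
    (huconc : StrictConcaveOn ℝ (Ioi 0) u)
    (hux : ∀ x ∈ Ioi (0:ℝ), HasDerivAt u (ux x) x) (huxcont : ContinuousOn ux (Ioi 0))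
    -- `u'` is a strictly decreasing bijection of `(0,∞)` onto itself, with inverse `I`
    (huxanti : StrictAntiOn ux (Ioi 0)) (huxbij : BijOn ux (Ioi 0) (Ioi 0))
    (hImaps : MapsTo I (Ioi 0) (Ioi 0))
    (hIleft : ∀ x ∈ Ioi (0:ℝ), I (ux x) = x) (hIright : ∀ y ∈ Ioi (0:ℝ), ux (I y) = y)
    -- `X` is a continuous strictly increasing bijection of `(0,∞)` onto itself, inverse `XI`
    (hXcont : ContinuousOn X (Ioi 0)) (hXmono : StrictMonoOn X (Ioi 0))
    (hXbij : BijOn X (Ioi 0) (Ioi 0))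
    (hXImaps : MapsTo XI (Ioi 0) (Ioi 0))
    (hXIleft : ∀ x ∈ Ioi (0:ℝ), XI (X x) = x) (hXIright : ∀ z ∈ Ioi (0:ℝ), X (XI z) = z)
    -- `U(x) := ∫₀ˣ u'(XI(z)) dz` is finite for all `x > 0`
    (hUfin : ∀ x ∈ Ioi (0:ℝ), MeasureTheory.IntegrableOn (fun z => ux (XI z)) (Ioc 0 x))
    -- `z ↦ X((u')⁻¹(z))` is integrable on `(y,∞)` for each `y > 0`
    (hint : ∀ y ∈ Ioi (0:ℝ), MeasureTheory.IntegrableOn (fun z => X (I z)) (Ioi y)) :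
    ∀ y ∈ Ioi (0:ℝ),
      -- `Ũ(y) = ∫_y^∞ X(I(z)) dz`
      sSup ((fun x => (∫ z in Ioc (0:ℝ) x, ux (XI z)) - x * y) '' Ioi 0)
        = (∫ z in Ioi y, X (I z)) ∧
      -- and `I(z) = (u')⁻¹(z) = −ũ'(z)`, i.e. the conjugate `ũ` of `u` has derivative `−I`
      HasDerivAt (fun y' => sSup ((fun x => u x - x * y') '' Ioi 0)) (-(I y)) y := by
  intro y hy
  refine ⟨?_, aux_deriv u ux I huconc hux huxanti huxbij.mapsTo hImaps hIleft hIright y hy⟩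
  refine aux_conj (fun z => ux (XI z)) (fun z => X (I z)) ?_ ?_ ?_ hUfin y hy
  · intro a ha b hb hab
    refine huxanti (hXImaps ha) (hXImaps hb) ?_
    rw [← hXmono.lt_iff_lt (hXImaps ha) (hXImaps hb), hXIright a ha, hXIright b hb]
    exact hab
  · intro w hw
    exact hXbij.mapsTo (hImaps hw)
  · intro w hw
    show ux (XI (X (I w))) = w
    rw [hXIleft _ (hImaps hw), hIright w hw]
end
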